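/- arXiv:2501.09734 — 2 statements merged into one kernel-verified Lean document; each statement's English description precedes it below -/
import Mathlib

section
/- Let ε > 0, ε_S ∈ (0,1), S_max > 0, α_max > 0 and 0 < α ≤ α_max. Let f : ℝ^d → ℝ be twice differentiable at x ∈ ℝ^d, let S ∈ ℝ^{l×d} and ŝ ∈ ℝ^l. Set c = √( 4·√(1−ε_S)·S_max / (3·α_max) ). Assume: (a) ‖S‖ ≤ S_max; (b) ‖S·∇²f(x)‖ ≤ c·√ε; (c) ‖S·∇f(x)‖² ≥ (1−ε_S)·ε²; (d) S∇f(x) + S∇²f(x)Sᵀŝ + (1/α)·S Sᵀŝ·‖Sᵀŝ‖ = 0. Then ‖Sᵀŝ‖ ≥ α·√( √(1−ε_S)·ε / (3·S_max·α_max) ). -/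
open scoped BigOperators NNReal
open MeasureTheory ProbabilityTheory

namespace RARC

noncomputable def enorm {n : ℕ} (v : Fin n → ℝ) : ℝ := Real.sqrt (∑ i, v i ^ 2)

noncomputable def opNorm {m n : ℕ} (S : Matrix (Fin m) (Fin n) ℝ) : ℝ :=
  sSup {c : ℝ | ∃ v : Fin n → ℝ, enorm v = 1 ∧ c = enorm (S.mulVec v)}

noncomputable def grad {n : ℕ} (f : (Fin n → ℝ) → ℝ) (x : Fin n → ℝ) : Fin n → ℝ :=
  fun i => fderiv ℝ f x (Pi.single i 1)

noncomputable def hess {n : ℕ} (f : (Fin n → ℝ) → ℝ) (x : Fin n → ℝ) :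
    Matrix (Fin n) (Fin n) ℝ :=
  Matrix.of fun i j =>
    fderiv ℝ (fun y => fderiv ℝ f y (Pi.single j 1)) x (Pi.single i 1)

noncomputable def qhat {d l : ℕ} (f : (Fin d → ℝ) → ℝ) (x : Fin d → ℝ)
    (S : Matrix (Fin l) (Fin d) ℝ) (s : Fin l → ℝ) : ℝ :=
  f x + (∑ i, S.mulVec (grad f x) i * s i)
    + (1/2) * (∑ i, s i * (S * hess f x * S.transpose).mulVec s i)

noncomputable def mhat {d l : ℕ} (f : (Fin d → ℝ) → ℝ) (x : Fin d → ℝ)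
    (S : Matrix (Fin l) (Fin d) ℝ) (α : ℝ) (s : Fin l → ℝ) : ℝ :=
  qhat f x S s + (1/(3*α)) * enorm (S.transpose.mulVec s) ^ 3

noncomputable def lambdaMin {n : ℕ} (A : Matrix (Fin n) (Fin n) ℝ) : ℝ :=
  sInf {t : ℝ | ∃ v : Fin n → ℝ, enorm v = 1 ∧ t = ∑ i, v i * A.mulVec v i}

def LipschitzHessian {n : ℕ} (f : (Fin n → ℝ) → ℝ) (L : ℝ) : Prop :=
  ∀ x y : Fin n → ℝ, opNorm (hess f y - hess f x) ≤ L * enorm (y - x)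

noncomputable def augM {d : ℕ} (f : (Fin d → ℝ) → ℝ) (x : Fin d → ℝ) :
    Matrix (Fin d) (Fin (d+1)) ℝ :=
  Matrix.of fun i j => Fin.cases (grad f x i) (fun j' => hess f x i j') j

noncomputable def gaussVec (l : ℕ) : Measure (Fin l → ℝ) :=
  Measure.pi fun _ => gaussianReal 0 (l : ℝ≥0)⁻¹

noncomputable def scaledGaussian (l d : ℕ) : Measure (Fin l → Fin d → ℝ) :=
  Measure.pi fun _ : Fin l => Measure.pi fun _ : Fin d => gaussianReal 0 (l : ℝ≥0)⁻¹

/-!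
With `b = S ∇f(x)`, `A = S ∇²f(x)`, `T = S` and `w = Sᵀ ŝ`, taking norms in the stationarity
equation `b + A w + (‖w‖ / α) T w = 0` gives `‖b‖ ≤ ‖A‖ ‖w‖ + ‖T‖ ‖w‖² / α`. In terms of
`t = ‖w‖ / α`, and with `τ` the square root in the conclusion, the bounds on `b`, `A` and `T` turn
this into `3 τ² ≤ 2 τ t + t²`, that is `0 ≤ (t - τ) (t + 3 τ)`, which forces `τ ≤ t`.
-/

theorem le_of_three_mul_sq_le {τ t : ℝ} (ht : 0 ≤ t) (h : 3 * τ ^ 2 ≤ 2 * τ * t + t ^ 2) :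
    τ ≤ t := by
  by_contra! hlt
  have hpos : 0 < (τ - t) * (t + 3 * τ) := mul_pos (sub_pos.2 hlt) (by linarith)
  linarith

theorem sqrt_mul_sqrt_eq_two_mul_mul_sqrt {ε M : ℝ} (q a : ℝ) (hε : 0 ≤ ε) (hM : 0 < M) :
    √(4 * q * M / (3 * a)) * √ε = 2 * M * √(q * ε / (3 * M * a)) := by
  have hsq : 4 * q * M / (3 * a) * ε = (2 * M) ^ 2 * (q * ε / (3 * M * a)) := by
    field_simp
    ring
  rw [← Real.sqrt_mul' _ hε, hsq, Real.sqrt_mul (sq_nonneg _), Real.sqrt_sq (by positivity)]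

section CubicStationarity

variable {E F : Type*} [SeminormedAddCommGroup E] [NormedSpace ℝ E]
  [SeminormedAddCommGroup F] [NormedSpace ℝ F] {T A : E →L[ℝ] F} {b : F} {w : E}

theorem norm_le_of_add_add_smul_eq_zero {σ : ℝ} (h : b + A w + σ • T w = 0) :
    ‖b‖ ≤ ‖A‖ * ‖w‖ + |σ| * (‖T‖ * ‖w‖) := by
  have hb : b = -(A w + σ • T w) := by
    rw [eq_neg_iff_add_eq_zero, ← add_assoc, h]
  calc ‖b‖ = ‖A w + σ • T w‖ := by rw [hb, norm_neg]
    _ ≤ ‖A w‖ + ‖σ • T w‖ := norm_add_le _ _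
    _ = ‖A w‖ + |σ| * ‖T w‖ := by rw [norm_smul, Real.norm_eq_abs]
    _ ≤ ‖A‖ * ‖w‖ + |σ| * (‖T‖ * ‖w‖) := by gcongr <;> exact ContinuousLinearMap.le_opNorm _ _

theorem mul_le_norm_of_add_add_smul_eq_zero {M τ α a : ℝ} (hM : 0 < M) (hα : 0 < α) (hαa : α ≤ a)
    (hT : ‖T‖ ≤ M) (hA : ‖A‖ ≤ 2 * M * τ) (hb : 3 * M * a * τ ^ 2 ≤ ‖b‖)
    (h : b + A w + (1 / α * ‖w‖) • T w = 0) : α * τ ≤ ‖w‖ := by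
  have hscaled : α * M * (3 * τ ^ 2) ≤ α * M * (2 * τ * (‖w‖ / α) + (‖w‖ / α) ^ 2) :=
    calc α * M * (3 * τ ^ 2) = 3 * M * α * τ ^ 2 := by ring
      _ ≤ 3 * M * a * τ ^ 2 := by gcongr
      _ ≤ ‖b‖ := hb
      _ ≤ ‖A‖ * ‖w‖ + |1 / α * ‖w‖| * (‖T‖ * ‖w‖) := norm_le_of_add_add_smul_eq_zero h
      _ = ‖A‖ * ‖w‖ + 1 / α * ‖w‖ * (‖T‖ * ‖w‖) := by rw [abs_of_nonneg (by positivity)]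
      _ ≤ 2 * M * τ * ‖w‖ + 1 / α * ‖w‖ * (M * ‖w‖) := by gcongr
      _ = α * M * (2 * τ * (‖w‖ / α) + (‖w‖ / α) ^ 2) := by field_simp
  exact (le_div_iff₀' hα).1 <|
    le_of_three_mul_sq_le (by positivity) (le_of_mul_le_mul_left hscaled (by positivity))

theorem stmt15_general {ε ε_S S_max α_max α : ℝ} (hε : 0 ≤ ε) (hεS : ε_S ≤ 1) (hSmax : 0 < S_max)
    (hα : 0 < α) (hααmax : α ≤ α_max) (hT : ‖T‖ ≤ S_max)
    (hA : ‖A‖ ≤ √(4 * √(1 - ε_S) * S_max / (3 * α_max)) * √ε)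
    (hb : (1 - ε_S) * ε ^ 2 ≤ ‖b‖ ^ 2) (h : b + A w + (1 / α * ‖w‖) • T w = 0) :
    α * √(√(1 - ε_S) * ε / (3 * S_max * α_max)) ≤ ‖w‖ := by
  have hαmax : 0 < α_max := hα.trans_le hααmax
  have hb' : √(1 - ε_S) * ε ≤ ‖b‖ := by
    refine le_of_sq_le_sq ?_ (norm_nonneg b)
    rwa [mul_pow, Real.sq_sqrt (sub_nonneg.2 hεS)]
  have hτ : 3 * S_max * α_max * √(√(1 - ε_S) * ε / (3 * S_max * α_max)) ^ 2 = √(1 - ε_S) * ε := by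
    rw [Real.sq_sqrt (by positivity)]
    field_simp
  exact mul_le_norm_of_add_add_smul_eq_zero hSmax hα hααmax hT
    (hA.trans_eq (sqrt_mul_sqrt_eq_two_mul_mul_sqrt _ _ hε hSmax)) (hτ.trans_le hb') h

end CubicStationarity

section Euclidean

variable {ι κ μ : Type*} [Fintype ι] [Fintype κ] [DecidableEq κ] [Fintype μ]

/-- The continuous linear map between Euclidean spaces given by a rectangular matrix, through which
matrices enter the norm estimates; `Matrix.toEuclideanCLM` covers square matrices only. -/
noncomputable def euclideanCLM (S : Matrix ι κ ℝ) : EuclideanSpace ℝ κ →L[ℝ] EuclideanSpace ℝ ι :=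
  S.toEuclideanLin.toContinuousLinearMap

theorem euclideanCLM_toLp (S : Matrix ι κ ℝ) (v : κ → ℝ) :
    euclideanCLM S (WithLp.toLp 2 v) = WithLp.toLp 2 (S.mulVec v) :=
  rfl

theorem toLp_add_euclideanCLM_add_smul_eq_zero {A S : Matrix ι κ ℝ} {P : Matrix κ μ ℝ}
    {b : ι → ℝ} {s : μ → ℝ} {σ : ℝ} (h : b + (A * P).mulVec s + σ • (S * P).mulVec s = 0) :
    WithLp.toLp 2 b + euclideanCLM A (WithLp.toLp 2 (P.mulVec s))
      + σ • euclideanCLM S (WithLp.toLp 2 (P.mulVec s)) = 0 := by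
  simpa [euclideanCLM_toLp, Matrix.mulVec_mulVec] using congrArg (WithLp.toLp 2) h

theorem enorm_eq_norm_toLp {n : ℕ} (v : Fin n → ℝ) : enorm v = ‖WithLp.toLp 2 v‖ := by
  simp [enorm, EuclideanSpace.norm_eq]

theorem opNorm_eq_norm_euclideanCLM {m n : ℕ} (S : Matrix (Fin m) (Fin n) ℝ) :
    opNorm S = ‖euclideanCLM S‖ := by
  rw [← ContinuousLinearMap.sSup_sphere_eq_norm, opNorm]
  congr 1
  ext c
  simp [(WithLp.equiv 2 (Fin n → ℝ)).symm.surjective.exists, enorm_eq_norm_toLp,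
    euclideanCLM_toLp, eq_comm]

end Euclidean

theorem stmt15 {d l : ℕ} (ε ε_S S_max α_max α : ℝ)
    (hε : 0 < ε) (hεS : ε_S ∈ Set.Ioo (0:ℝ) 1) (hSmax : 0 < S_max)
    (hαmax : 0 < α_max) (hα : 0 < α) (hααmax : α ≤ α_max)
    (f : (Fin d → ℝ) → ℝ) (x : Fin d → ℝ)
    (hf1 : DifferentiableAt ℝ f x) (hf2 : DifferentiableAt ℝ (fderiv ℝ f) x)
    (S : Matrix (Fin l) (Fin d) ℝ) (sh : Fin l → ℝ)
    (c : ℝ) (hcdef : c = Real.sqrt (4 * Real.sqrt (1 - ε_S) * S_max / (3 * α_max)))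
    (ha : opNorm S ≤ S_max)
    (hb : opNorm (S * hess f x) ≤ c * Real.sqrt ε)
    (hc : enorm (S.mulVec (grad f x)) ^ 2 ≥ (1 - ε_S) * ε ^ 2)
    (hd : S.mulVec (grad f x) + (S * hess f x * S.transpose).mulVec sh
            + ((1/α) * enorm (S.transpose.mulVec sh)) • (S * S.transpose).mulVec sh = 0) :
    enorm (S.transpose.mulVec sh)
      ≥ α * Real.sqrt (Real.sqrt (1 - ε_S) * ε / (3 * S_max * α_max)) := by
  subst hcdef
  simp only [enorm_eq_norm_toLp, opNorm_eq_norm_euclideanCLM] at ha hb hc hd ⊢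
  exact stmt15_general hε.le hεS.2.le hSmax hα hααmax ha hb hc
    (toLp_add_euclideanCLM_add_smul_eq_zero hd)

end RARC
end

section
/- Let C, D be natural numbers with C ≥ 1 and D ≥ 1. Let (l_k)_{k≥0} and (r_k)_{k≥0} be sequences of natural numbers with l₀ ≥ 1, set r̂_k = min(l_k, r_k) and R̂_k = max_{0 ≤ j ≤ k} r̂_j, and suppose the update rule holds for every k ≥ 0: l_{k+1} = max( C·R̂_k + D, l_k ) if k = 0 or R̂_k > R̂_{k−1}, and l_{k+1} = l_k otherwise. Then for every k ≥ 1 such that l_k < C·r_k + D, one has R̂_k > R̂_{k−1}. -/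
/-!
Write `φ x = C * x + D`. The bound `φ (R̂ k) ≤ l (k + 1)` holds for every `k`: it is enforced at
`k = 0` and whenever `R̂` increases, and is inherited in between because `R̂` is constant there and
`l` never decreases. Hence `φ (R̂ (k - 1)) ≤ l k < φ (r k)` forces `R̂ (k - 1) < r k`, while
`x < φ x` gives `R̂ (k - 1) < l k`; so `min (l k) (r k)` exceeds `R̂ (k - 1)`.
-/

section UpdateRule

variable {α : Type*} [LinearOrder α] {l g : ℕ → α} {p : ℕ → Prop} [DecidablePred p]

theorem monotone_of_succ_eq_ite_max
    (h : ∀ k, l (k + 1) = if p k then max (g k) (l k) else l k) : Monotone l := by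
  refine monotone_nat_of_le_succ fun k => ?_
  rw [h k]
  split_ifs
  exacts [le_max_right _ _, le_rfl]

theorem le_succ_of_succ_eq_ite_max
    (h : ∀ k, l (k + 1) = if p k then max (g k) (l k) else l k) {k : ℕ} (hk : p k) :
    g k ≤ l (k + 1) := by
  rw [h k, if_pos hk]
  exact le_max_left _ _

end UpdateRule

theorem apply_partialSups_le_succ {α β : Type*} [SemilatticeSup α] [Preorder β]
    {φ : α → β} {u : ℕ → α} {l : ℕ → β} (hl : Monotone l)
    (hjump : ∀ k, k = 0 ∨ partialSups u (k - 1) < partialSups u k →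
      φ (partialSups u k) ≤ l (k + 1)) (k : ℕ) :
    φ (partialSups u k) ≤ l (k + 1) := by
  induction k with
  | zero => exact hjump 0 (Or.inl rfl)
  | succ k ih =>
    by_cases hlt : partialSups u k < partialSups u (k + 1)
    · exact hjump (k + 1) (Or.inr hlt)
    · have hconst : partialSups u k = partialSups u (k + 1) :=
        eq_of_le_of_not_lt ((partialSups u).monotone k.le_succ) hlt
      calc φ (partialSups u (k + 1)) = φ (partialSups u k) := by rw [hconst]
        _ ≤ l (k + 1) := ih
        _ ≤ l (k + 2) := hl (k + 1).le_succ

theorem stmt17_general {α : Type*} [LinearOrder α] {φ : α → α} (hφ : Monotone φ)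
    (hφ_lt : ∀ x, x < φ x) {l r rhat : ℕ → α} (hrhat : ∀ k, min (l k) (r k) ≤ rhat k)
    (hl : Monotone l)
    (hjump : ∀ k, k = 0 ∨ partialSups rhat (k - 1) < partialSups rhat k →
      φ (partialSups rhat k) ≤ l (k + 1))
    (k : ℕ) (hk : 1 ≤ k) (hlr : l k < φ (r k)) :
    partialSups rhat (k - 1) < partialSups rhat k := by
  have hφ_le : φ (partialSups rhat (k - 1)) ≤ l k := by
    simpa only [Nat.sub_add_cancel hk] using apply_partialSups_le_succ hl hjump (k - 1)
  have hlt_l : partialSups rhat (k - 1) < l k := (hφ_lt _).trans_le hφ_le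
  have hlt_r : partialSups rhat (k - 1) < r k := hφ.reflect_lt (hφ_le.trans_lt hlr)
  calc partialSups rhat (k - 1) < min (l k) (r k) := lt_min hlt_l hlt_r
    _ ≤ rhat k := hrhat k
    _ ≤ partialSups rhat k := le_partialSups rhat k

theorem stmt17 (C D : ℕ) (hC : 1 ≤ C) (hD : 1 ≤ D)
    (l r rhat Rhat : ℕ → ℕ) (hl0 : 1 ≤ l 0)
    (hrhat : ∀ k, rhat k = min (l k) (r k))
    (hRhat : ∀ k, Rhat k = (Finset.range (k+1)).sup rhat)
    (hupdate : ∀ k, l (k+1) =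
      if k = 0 ∨ Rhat (k-1) < Rhat k then max (C * Rhat k + D) (l k) else l k) :
    ∀ k, 1 ≤ k → l k < C * r k + D → Rhat (k-1) < Rhat k := by
  obtain rfl : Rhat = partialSups rhat :=
    funext fun k => (hRhat k).trans (partialSups_eq_sup_range rhat k).symm
  exact stmt17_general (φ := fun x => C * x + D)
    (fun _ _ h => Nat.add_le_add_right (Nat.mul_le_mul_left C h) D)
    (fun x => (Nat.le_mul_of_pos_left x hC).trans_lt (Nat.lt_add_of_pos_right hD))
    (fun k => (hrhat k).ge) (monotone_of_succ_eq_ite_max hupdate)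
    (fun _ => le_succ_of_succ_eq_ite_max hupdate)
end
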